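/- Let n ≥ 1 and let E' : Fin n → Fin n → Prop be a directed graph. Work over the block type consisting of a distinguished block X and blocks Node(u) for u : Fin n. Then the following are equivalent: (1) there is a Hamiltonian circuit through vertex 0, i.e. a sequence v : Fin (n+1) → Fin n with v 0 = 0, v n = 0, E' (v j) (v (j+1)) for all j < n, and j ↦ v j injective on {1, …, n}; (2) there is a sequence v : Fin (n+1) → Fin n with v 0 = 0, v n = 0 and E' (v j) (v (j+1)) for all j < n, such that X ∉ lruRun n [] (X :: List.ofFn (fun j : Fin n => Node (v (j+1)))). (This is the correctness of the reduction from the Hamiltonian circuit problem to the LRU exist-miss problem: the sequences in (2) are exactly the walks from v₀⁰ to v₀ⁿ through the layered control-flow graph, prefixed by the access to X.) -/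

import Mathlib

/-- One access to an LRU cache of associativity `N`. -/
def lruAccess {B : Type*} [DecidableEq B] (N : ℕ) (w : List B) (a : B) : List B :=
  if a ∈ w then w.erase a ++ [a]
  else if w.length < N then w ++ [a]
  else w.tail ++ [a]

/-- Process a list of accesses in order, starting from state `w`. -/
def lruRun {B : Type*} [DecidableEq B] (N : ℕ) (w t : List B) : List B :=
  t.foldl (lruAccess N) w

/-!
An LRU cache that starts empty holds the `N` most recently used distinct blocks. As `List.dedup`
keeps the last occurrence of every entry, it orders blocks from least to most recently used, so the
state after a trace `t` is the list of the last `N` entries of `t.dedup`. Hence a block accessed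
just before `t`, and not in `t`, is evicted exactly when `t` contains at least `N` distinct blocks.
A closed walk of length `n` on `n` vertices thus evicts `X` from a cache of associativity `n`
exactly when the vertices it enters in its `n` steps are distinct.
-/

section SuffixesAndDedup

variable {α : Type*}

theorem rtake_append (k : ℕ) (l₁ l₂ : List α) :
    (l₁ ++ l₂).rtake k = l₁.rtake (k - l₂.length) ++ l₂.rtake k := by
  have h₁ : l₁.length + l₂.length - k - l₁.length = l₂.length - k := by omega
  obtain h | h := Nat.le_total k l₂.length
  · have h₂ : l₁.length ≤ l₁.length + l₂.length - k := by omega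
    simp [List.rtake, List.drop_append, h₁, h, h₂]
  · have h₂ : l₁.length - (k - l₂.length) = l₁.length + l₂.length - k := by omega
    simp [List.rtake, List.drop_append, h₁, h₂]

theorem rtake_of_length_le {k : ℕ} {l : List α} (h : l.length ≤ k) : l.rtake k = l := by
  simp [List.rtake, h]

theorem length_rtake (k : ℕ) (l : List α) : (l.rtake k).length = min k l.length := by
  simp only [List.rtake, List.length_drop]
  omega

theorem mem_rtake_append_cons_iff {k : ℕ} {u v : List α} {x : α} (hx : x ∉ v) :
    x ∈ (u ++ x :: v).rtake k ↔ v.length < k := by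
  obtain h | h := Nat.lt_or_ge v.length k
  · simp [rtake_append, rtake_of_length_le (l := x :: v) h, h]
  · have hdrop : (u ++ x :: v).rtake k = v.rtake k := by
      rw [List.append_cons, rtake_append, Nat.sub_eq_zero_of_le h, List.rtake_zero, List.nil_append]
    rw [hdrop]
    exact iff_of_false (fun hmem => hx (List.mem_of_mem_drop hmem)) h.not_gt

variable [DecidableEq α]

theorem rtake_erase_rtake_succ {l : List α} (hl : l.Nodup) (k : ℕ) (a : α) :
    ((l.rtake (k + 1)).erase a).rtake k = (l.erase a).rtake k := by
  induction l using List.reverseRecOn generalizing k with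
  | nil => simp
  | append_singleton l b ih =>
    obtain ⟨hb, hl'⟩ : b ∉ l ∧ l.Nodup := List.nodup_cons.mp (List.nodup_append_comm.mp hl)
    rw [List.rtake_concat_succ]
    by_cases hab : a = b
    · subst hab
      have hrtake : a ∉ l.rtake k := fun h => hb (List.mem_of_mem_drop h)
      rw [List.erase_append_right _ hrtake, List.erase_append_right _ hb]
      simp [rtake_of_length_le, length_rtake]
    · have hsingle (m : List α) : (m ++ [b]).erase a = m.erase a ++ [b] := by
        by_cases ha : a ∈ m <;> simp [List.erase_append, List.erase_of_not_mem, ha, Ne.symm hab]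
      rw [hsingle, hsingle]
      cases k with
      | zero => simp
      | succ k => rw [List.rtake_concat_succ, List.rtake_concat_succ, ih hl']

theorem dedup_concat (l : List α) (a : α) : (l ++ [a]).dedup = l.dedup.erase a ++ [a] := by
  induction l with
  | nil => simp
  | cons b l ih =>
    by_cases hb : b ∈ l
    · simp [List.dedup_cons_of_mem, hb, ih]
    · by_cases hba : b = a
      · subst hba
        simp [List.dedup_cons_of_mem, List.dedup_cons_of_notMem, hb, ih, List.erase_of_not_mem]
      · simp [List.dedup_cons_of_notMem, hb, hba, ih]

theorem length_le_length_dedup_iff_nodup {l : List α} : l.length ≤ l.dedup.length ↔ l.Nodup :=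
  ⟨fun h => List.dedup_eq_self.mp (l.dedup_sublist.eq_of_length_le h), fun h => by rw [h.dedup]⟩

end SuffixesAndDedup

section LRU

variable {B : Type*} [DecidableEq B]

theorem lruAccess_succ_eq {k : ℕ} {w : List B} (hw : w.length ≤ k + 1) (a : B) :
    lruAccess (k + 1) w a = (w.erase a).rtake k ++ [a] := by
  unfold lruAccess
  split_ifs with hit hroom
  · rw [rtake_of_length_le (by rw [List.length_erase_of_mem hit]; omega)]
  · rw [List.erase_of_not_mem hit, rtake_of_length_le (by omega)]
  · have hfull : w.length - k = 1 := by omega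
    rw [List.erase_of_not_mem hit, List.rtake, hfull, List.drop_one]

theorem lruAccess_rtake {N : ℕ} (hN : 0 < N) {l : List B} (hl : l.Nodup) (a : B) :
    lruAccess N (l.rtake N) a = (l.erase a ++ [a]).rtake N := by
  obtain ⟨k, rfl⟩ := Nat.exists_eq_add_one.mpr hN
  have hlen : (l.rtake (k + 1)).length ≤ k + 1 := by simp [length_rtake]
  rw [lruAccess_succ_eq hlen, rtake_erase_rtake_succ hl, List.rtake_concat_succ]

theorem lruRun_eq_rtake_dedup {N : ℕ} (hN : 0 < N) {w : List B} (hw : w.Nodup)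
    (hlen : w.length ≤ N) (t : List B) :
    lruRun N w t = (w ++ t).dedup.rtake N := by
  induction t using List.reverseRecOn with
  | nil => simp [lruRun, hw.dedup, rtake_of_length_le hlen]
  | append_singleton t a ih =>
    calc lruRun N w (t ++ [a])
      _ = lruAccess N (lruRun N w t) a := by simp [lruRun]
      _ = lruAccess N ((w ++ t).dedup.rtake N) a := by rw [ih]
      _ = ((w ++ t).dedup.erase a ++ [a]).rtake N := lruAccess_rtake hN (List.nodup_dedup _) a
      _ = (w ++ (t ++ [a])).dedup.rtake N := by rw [← dedup_concat, List.append_assoc]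

theorem mem_lruRun_cons_iff {N : ℕ} (hN : 0 < N) {w : List B} (hw : w.Nodup)
    (hlen : w.length ≤ N) {x : B} {t : List B} (hx : x ∉ t) :
    x ∈ lruRun N w (x :: t) ↔ t.dedup.length < N := by
  obtain ⟨u, hu⟩ : (x :: t).dedup <:+ (w ++ x :: t).dedup := by
    rw [List.dedup_append]
    exact List.suffix_union_right _ _
  rw [lruRun_eq_rtake_dedup hN hw hlen, ← hu, List.dedup_cons_of_notMem hx,
    mem_rtake_append_cons_iff (mt List.mem_dedup.mp hx)]

end LRU

/-- correctness of the reduction from the Hamiltonian circuit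
problem to the LRU exist-miss problem.  Blocks are `Option (Fin n)`: `none` is
the distinguished block `X` and `some u` is the block `Node u`. -/
theorem lru_exist_miss_hamiltonian_reduction (n : ℕ) [NeZero n]
    (E' : Fin n → Fin n → Prop) :
    (∃ v : Fin (n + 1) → Fin n, v 0 = 0 ∧ v (Fin.last n) = 0 ∧
      (∀ j : Fin n, E' (v j.castSucc) (v j.succ)) ∧
      Function.Injective fun j : Fin n => v j.succ) ↔
    (∃ v : Fin (n + 1) → Fin n, v 0 = 0 ∧ v (Fin.last n) = 0 ∧
      (∀ j : Fin n, E' (v j.castSucc) (v j.succ)) ∧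
      (none : Option (Fin n)) ∉
        lruRun n ([] : List (Option (Fin n)))
          (none :: List.ofFn fun j : Fin n => some (v j.succ))) := by
  refine exists_congr fun v => and_congr_right fun _ => and_congr_right fun _ =>
    and_congr_right fun _ => ?_
  set t : List (Option (Fin n)) := List.ofFn fun j : Fin n => some (v j.succ)
  have hX : none ∉ t := by simp [t, List.mem_ofFn]
  have hlen : t.length = n := List.length_ofFn
  calc (Function.Injective fun j : Fin n => v j.succ)
    _ ↔ Function.Injective fun j : Fin n => some (v j.succ) :=
      ((Option.some_injective _).of_comp_iff _).symm
    _ ↔ t.Nodup := List.nodup_ofFn.symm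
    _ ↔ n ≤ t.dedup.length := by rw [← length_le_length_dedup_iff_nodup, hlen]
    _ ↔ none ∉ lruRun n [] (none :: t) := by
      rw [mem_lruRun_cons_iff (NeZero.pos n) List.nodup_nil (Nat.zero_le n) hX, not_lt]
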